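/- Assume the WENO weight setup in the jump setting, and additionally assume κ := Σ_{i=l+1}^{R−1} 1/Π_{j≠i}(c_i − c_j) ≠ 0 and that at least one substencil is clean. Then there exist C > 0 and h₀ > 0 such that for every ε with 0 < ε ≤ 1 and every 0 < h < h₀: 0 ≤ ω_{R,h} ≤ C·(h^{2s} + ε). -/

import Mathlib

/-- Simple smoothness indicator `I_{R,i,h}` on the nonuniform stencil `x_{i,h} = z + cᵢ h`,
with `r = ⌊(R-1)/2⌋`. -/
noncomputable def wenoI (R : ℕ) (c : ℕ → ℝ) (z : ℝ) (f : ℝ → ℝ) (i : ℕ) (h : ℝ) : ℝ :=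
  ∑ j ∈ Finset.Ico i (i + (R - 1) / 2),
    ((f (z + c (j + 1) * h) - f (z + c j * h)) / (c (j + 1) - c j)) ^ 2

/-- Squared undivided difference `d_{R,h}` of `f` on the full stencil. -/
noncomputable def wenoD (R : ℕ) (c : ℕ → ℝ) (z : ℝ) (f : ℝ → ℝ) (h : ℝ) : ℝ :=
  (((R - 1).factorial : ℝ) *
      ∑ i ∈ Finset.range R,
        f (z + c i * h) / ∏ j ∈ (Finset.range R).erase i, (c i - c j)) ^ 2

/-- Unnormalized WENO weight `α_{R,i,h}`, with `r' = ⌈(R-1)/2⌉ = R/2` (ℕ-division). -/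
noncomputable def wenoAlpha (R : ℕ) (c : ℕ → ℝ) (z : ℝ) (f : ℝ → ℝ) (s : ℕ) (ε : ℝ)
    (i : ℕ) (h : ℝ) : ℝ :=
  (1 / (((R / 2 : ℕ) : ℝ) + 1)) *
    (1 + (wenoD R c z f h) ^ s / ((wenoI R c z f i h) ^ s + ε))

/-- Normalized WENO weight `ω_{R,i,h}`. -/
noncomputable def wenoOmega (R : ℕ) (c : ℕ → ℝ) (z : ℝ) (f : ℝ → ℝ) (s : ℕ) (ε : ℝ)
    (i : ℕ) (h : ℝ) : ℝ :=
  wenoAlpha R c z f s ε i h / ∑ j ∈ Finset.range (R / 2 + 1), wenoAlpha R c z f s ε j h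

/-- Global average weight `ω_{R,h}`. -/
noncomputable def wenoOmegaG (R : ℕ) (c : ℕ → ℝ) (z : ℝ) (f : ℝ → ℝ) (s : ℕ) (ε : ℝ)
    (h : ℝ) : ℝ :=
  1 / (1 + (wenoD R c z f h) ^ s *
        ∑ i ∈ Finset.range (R / 2 + 1), 1 / ((wenoI R c z f i h) ^ s + ε))

/-!
As `h → 0⁺`, the data at the nodes tend at linear rate to a step: the left limit `a` on the nodes of
index at most `l`, the right limit `b ≠ a` on the others. The leading coefficients `1 / ∏ (cᵢ - cⱼ)`
of the Lagrange basis polynomials add up to zero, because these polynomials add up to `1`. Hence the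
full undivided difference tends to a nonzero multiple of `(b - a) κ`, and `wenoD` stays away from
zero. On a clean substencil all nodes see the same limit, so its smoothness indicator `I` is
`O(h²)`, and the term `1 / (I ^ s + ε)` alone makes the denominator of `wenoOmegaG` at least of
order `1 / (h ^ (2 s) + ε)`.
-/

open Asymptotics Filter Topology

section LeadingCoefficients

variable {F : Type*} [Field F]

theorem sum_one_div_prod_sub_eq_zero {ι : Type*} [DecidableEq ι] {s : Finset ι} {v : ι → F}
    (hv : Set.InjOn v s) (hs : 1 < s.card) :
    ∑ i ∈ s, 1 / ∏ j ∈ s.erase i, (v i - v j) = 0 := by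
  have hdeg : (1 : Polynomial F).degree < s.card := by
    rw [Polynomial.degree_one]
    exact_mod_cast zero_lt_one.trans hs
  have hcoeff := Lagrange.coeff_eq_sum hv hdeg
  rw [Polynomial.coeff_one, if_neg (by omega)] at hcoeff
  simpa using hcoeff.symm

theorem sum_step_div_of_sum_one_div_eq_zero {n l : ℕ} {w : ℕ → F} (hl : l < n)
    (hw : ∑ i ∈ Finset.range n, 1 / w i = 0) (a b : F) :
    ∑ i ∈ Finset.range n, (if i ≤ l then a else b) / w i =
      (b - a) * ∑ i ∈ Finset.Ico (l + 1) n, 1 / w i := by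
  have hleft : ∑ i ∈ Finset.range (l + 1), (if i ≤ l then a else b) / w i =
      a * ∑ i ∈ Finset.range (l + 1), 1 / w i := by
    rw [Finset.mul_sum]
    refine Finset.sum_congr rfl fun i hi => ?_
    rw [if_pos (Finset.mem_range_succ_iff.mp hi), mul_one_div]
  have hright : ∑ i ∈ Finset.Ico (l + 1) n, (if i ≤ l then a else b) / w i =
      b * ∑ i ∈ Finset.Ico (l + 1) n, 1 / w i := by
    rw [Finset.mul_sum]
    refine Finset.sum_congr rfl fun i hi => ?_
    rw [if_neg (Nat.not_le_of_lt (Finset.mem_Ico.mp hi).1), mul_one_div]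
  rw [← Finset.sum_range_add_sum_Ico _ hl] at hw ⊢
  rw [hleft, hright]
  linear_combination a * hw

end LeadingCoefficients

section NodeValues

theorem isBigO_sub_of_eqOn {𝕜 E F : Type*} [NontriviallyNormedField 𝕜]
    [NormedAddCommGroup E] [NormedSpace 𝕜 E] [NormedAddCommGroup F] [NormedSpace 𝕜 F]
    {f g : E → F} {S : Set E} {z : E} (hg : DifferentiableWithinAt 𝕜 g S z)
    (hfg : Set.EqOn f g S) : (fun x => f x - g z) =O[𝓝[S] z] (fun x => x - z) :=
  hg.isBigO_sub.congr' (eventually_mem_nhdsWithin.mono fun x hx => by simp only [hfg hx]) .rfl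

variable {E : Type*} [SeminormedAddCommGroup E] {f : ℝ → E} {z : ℝ} {a b : E}

theorem isBigO_comp_add_mul {S : Set ℝ} {t : ℝ}
    (hf : (fun x => f x - a) =O[𝓝[S] z] (fun x => x - z))
    (ht : ∀ h > 0, z + t * h ∈ S) :
    (fun h => f (z + t * h) - a) =O[𝓝[>] 0] (fun h => h) := by
  have hlim : Tendsto (fun h : ℝ => z + t * h) (𝓝[>] 0) (𝓝[S] z) := by
    refine tendsto_nhdsWithin_iff.mpr ⟨?_, eventually_mem_nhdsWithin.mono ht⟩
    have hcont : Continuous fun h : ℝ => z + t * h := by fun_prop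
    simpa using (hcont.tendsto 0).mono_left nhdsWithin_le_nhds
  refine (hf.comp_tendsto hlim).trans ?_
  simpa [Function.comp_def] using (isBigO_refl (fun h : ℝ => h) _).const_mul_left t

theorem isBigO_node_sub_step {R l : ℕ} {c : ℕ → ℝ} (hc : MonotoneOn c (Set.Iio R))
    (hl : l + 1 < R) (hcl : c l < 0) (hcl' : 0 ≤ c (l + 1))
    (hleft : (fun x => f x - a) =O[𝓝[<] z] (fun x => x - z))
    (hright : (fun x => f x - b) =O[𝓝[≥] z] (fun x => x - z)) {i : ℕ} (hi : i < R) :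
    (fun h => f (z + c i * h) - if i ≤ l then a else b) =O[𝓝[>] 0] (fun h => h) := by
  split_ifs with hil
  · have hci : c i < 0 := (hc hi (Nat.lt_of_succ_lt hl) hil).trans_lt hcl
    exact isBigO_comp_add_mul hleft fun h hh =>
      add_lt_of_neg_right z (mul_neg_of_neg_of_pos hci hh)
  · have hci : 0 ≤ c i := hcl'.trans (hc hl hi (Nat.lt_of_not_le hil))
    exact isBigO_comp_add_mul hright fun h hh =>
      le_add_of_nonneg_right (mul_nonneg hci hh.le)

end NodeValues

section WenoWeights

variable {R : ℕ} {c : ℕ → ℝ} {z : ℝ} {f : ℝ → ℝ}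

theorem wenoI_nonneg (i : ℕ) (h : ℝ) : 0 ≤ wenoI R c z f i h :=
  Finset.sum_nonneg fun _ _ => sq_nonneg _

theorem wenoD_nonneg (h : ℝ) : 0 ≤ wenoD R c z f h :=
  sq_nonneg _

theorem isBigO_wenoI {F : Filter ℝ} {i : ℕ} {v : ℝ}
    (hv : ∀ j ∈ Finset.Icc i (i + (R - 1) / 2), (fun h => f (z + c j * h) - v) =O[F] (fun h => h)) :
    wenoI R c z f i =O[F] (fun h => h ^ 2) := by
  refine IsBigO.fun_sum fun j hj => IsBigO.pow ?_ 2
  rw [Finset.mem_Ico] at hj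
  have hdiff := (hv (j + 1) (Finset.mem_Icc.mpr (by omega))).sub
    (hv j (Finset.mem_Icc.mpr (by omega)))
  refine (hdiff.const_mul_left (c (j + 1) - c j)⁻¹).congr_left fun h => ?_
  ring

theorem isBigO_wenoI_of_clean {F : Filter ℝ} {i l : ℕ} {a b : ℝ}
    (hv : ∀ j < R, (fun h => f (z + c j * h) - if j ≤ l then a else b) =O[F] (fun h => h))
    (hiR : i + (R - 1) / 2 < R) (hclean : l ∉ Finset.Ico i (i + (R - 1) / 2)) :
    wenoI R c z f i =O[F] (fun h => h ^ 2) := by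
  refine isBigO_wenoI (v := if i ≤ l then a else b) fun j hj => ?_
  rw [Finset.mem_Icc] at hj
  rw [Finset.mem_Ico] at hclean
  have hside : j ≤ l ↔ i ≤ l := by omega
  simpa only [hside] using hv j (by omega)

theorem tendsto_wenoD {F : Filter ℝ} {v : ℕ → ℝ}
    (hv : ∀ i < R, Tendsto (fun h => f (z + c i * h)) F (𝓝 (v i))) :
    Tendsto (wenoD R c z f) F (𝓝 ((((R - 1).factorial : ℝ) *
      ∑ i ∈ Finset.range R, v i / ∏ j ∈ (Finset.range R).erase i, (c i - c j)) ^ 2)) :=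
  (Tendsto.const_mul _ (tendsto_finsetSum _ fun i hi =>
    (hv i (Finset.mem_range.mp hi)).div_const _)).pow 2

theorem exists_pos_eventually_lt_wenoD {F : Filter ℝ} {l : ℕ} {a b : ℝ}
    (hc : Set.InjOn c (Finset.range R)) (hl : l + 1 < R) (hab : a ≠ b)
    (hκ : ∑ i ∈ Finset.Ico (l + 1) R,
        1 / ∏ j ∈ (Finset.range R).erase i, (c i - c j) ≠ 0)
    (hv : ∀ i < R, Tendsto (fun h => f (z + c i * h)) F (𝓝 (if i ≤ l then a else b))) :
    ∃ m > 0, ∀ᶠ h in F, m < wenoD R c z f h := by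
  have hD := tendsto_wenoD hv
  rw [sum_step_div_of_sum_one_div_eq_zero (Nat.lt_of_succ_lt hl)
    (sum_one_div_prod_sub_eq_zero hc (by rw [Finset.card_range]; omega))] at hD
  have hpos : 0 < (((R - 1).factorial : ℝ) * ((b - a) * ∑ i ∈ Finset.Ico (l + 1) R,
      1 / ∏ j ∈ (Finset.range R).erase i, (c i - c j))) ^ 2 :=
    sq_pos_of_ne_zero (mul_ne_zero (Nat.cast_ne_zero.mpr (Nat.factorial_ne_zero _))
      (mul_ne_zero (sub_ne_zero.mpr hab.symm) hκ))
  exact ⟨_, half_pos hpos, hD.eventually_const_lt (half_lt_self hpos)⟩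

variable {s i : ℕ} {ε h : ℝ}

theorem wenoOmegaG_nonneg (hε : 0 ≤ ε) : 0 ≤ wenoOmegaG R c z f s ε h := by
  have hterm (k : ℕ) : 0 ≤ 1 / (wenoI R c z f k h ^ s + ε) :=
    one_div_nonneg.mpr (add_nonneg (pow_nonneg (wenoI_nonneg k h) s) hε)
  have hsum := Finset.sum_nonneg fun k (_ : k ∈ Finset.range (R / 2 + 1)) => hterm k
  exact one_div_nonneg.mpr
    (add_nonneg zero_le_one (mul_nonneg (pow_nonneg (wenoD_nonneg h) s) hsum))

theorem wenoOmegaG_le_div (hε : 0 < ε) (hi : i ≤ R / 2) (hD : 0 < wenoD R c z f h) :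
    wenoOmegaG R c z f s ε h ≤ (wenoI R c z f i h ^ s + ε) / wenoD R c z f h ^ s := by
  have hpos (k : ℕ) : 0 < wenoI R c z f k h ^ s + ε :=
    add_pos_of_nonneg_of_pos (pow_nonneg (wenoI_nonneg k h) s) hε
  have hterm : 1 / (wenoI R c z f i h ^ s + ε) ≤
      ∑ k ∈ Finset.range (R / 2 + 1), 1 / (wenoI R c z f k h ^ s + ε) :=
    Finset.single_le_sum (f := fun k => 1 / (wenoI R c z f k h ^ s + ε))
      (fun k _ => (one_div_pos.mpr (hpos k)).le) (Finset.mem_range_succ_iff.mpr hi)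
  have hDs : 0 < wenoD R c z f h ^ s := pow_pos hD s
  calc wenoOmegaG R c z f s ε h
      ≤ 1 / (wenoD R c z f h ^ s * (1 / (wenoI R c z f i h ^ s + ε))) := by
        refine one_div_le_one_div_of_le (mul_pos hDs (one_div_pos.mpr (hpos i))) ?_
        exact (mul_le_mul_of_nonneg_left hterm hDs.le).trans (le_add_of_nonneg_left zero_le_one)
    _ = (wenoI R c z f i h ^ s + ε) / wenoD R c z f h ^ s := by
        rw [mul_one_div, one_div_div]

theorem wenoOmegaG_le_mul {m K : ℝ} (hε : 0 < ε) (hi : i ≤ R / 2) (hm : 0 < m)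
    (hK : 0 ≤ K) (hD : m ≤ wenoD R c z f h) (hI : wenoI R c z f i h ≤ K * h ^ 2) :
    wenoOmegaG R c z f s ε h ≤ (K ^ s + 1) / m ^ s * (h ^ (2 * s) + ε) := by
  have hIs : wenoI R c z f i h ^ s ≤ K ^ s * h ^ (2 * s) := by
    rw [pow_mul, ← mul_pow]
    exact pow_le_pow_left₀ (wenoI_nonneg i h) hI s
  have hnum : wenoI R c z f i h ^ s + ε ≤ (K ^ s + 1) * (h ^ (2 * s) + ε) := by
    have hKε : 0 ≤ K ^ s * ε := by positivity
    have hh : 0 ≤ h ^ (2 * s) := (even_two_mul s).pow_nonneg h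
    linarith
  have hnum_nonneg : 0 ≤ wenoI R c z f i h ^ s + ε :=
    add_nonneg (pow_nonneg (wenoI_nonneg i h) s) hε.le
  calc wenoOmegaG R c z f s ε h
      ≤ (wenoI R c z f i h ^ s + ε) / wenoD R c z f h ^ s :=
        wenoOmegaG_le_div hε hi (hm.trans_le hD)
    _ ≤ ((K ^ s + 1) * (h ^ (2 * s) + ε)) / m ^ s :=
        div_le_div₀ (hnum_nonneg.trans hnum) hnum (pow_pos hm s) (pow_le_pow_left₀ hm.le hD s)
    _ = (K ^ s + 1) / m ^ s * (h ^ (2 * s) + ε) := mul_div_right_comm ..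

end WenoWeights

/-- Since `z` lies in `[z, ∞)`, the hypothesis `hright` also forces `f z = b`. -/
theorem stmt_10_general {R l : ℕ} {c : ℕ → ℝ} {z a b : ℝ} {f : ℝ → ℝ}
    (hc : StrictMonoOn c (Set.Iio R))
    (hleft : (fun x => f x - a) =O[𝓝[<] z] (fun x => x - z))
    (hright : (fun x => f x - b) =O[𝓝[≥] z] (fun x => x - z))
    (hab : a ≠ b) (hl : l + 1 < R) (hcl : c l < 0) (hcl' : 0 ≤ c (l + 1))
    (hκ : ∑ i ∈ Finset.Ico (l + 1) R,
        1 / ∏ j ∈ (Finset.range R).erase i, (c i - c j) ≠ 0)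
    (hclean : ∃ i ≤ R / 2, l ∉ Finset.Ico i (i + (R - 1) / 2)) (s : ℕ) :
    ∃ C > (0 : ℝ), ∃ h₀ > (0 : ℝ), ∀ ε : ℝ, 0 < ε → ∀ h : ℝ, 0 < h → h < h₀ →
      0 ≤ wenoOmegaG R c z f s ε h ∧
        wenoOmegaG R c z f s ε h ≤ C * (h ^ (2 * s) + ε) := by
  obtain ⟨i, hi, hil⟩ := hclean
  have hnode : ∀ j < R, (fun h => f (z + c j * h) - if j ≤ l then a else b) =O[𝓝[>] 0]
      (fun h => h) := fun j hj =>
    isBigO_node_sub_step hc.monotoneOn hl hcl hcl' hleft hright hj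
  have hlim : ∀ j < R, Tendsto (fun h => f (z + c j * h)) (𝓝[>] 0)
      (𝓝 (if j ≤ l then a else b)) := fun j hj =>
    tendsto_sub_nhds_zero_iff.mp ((hnode j hj).trans_tendsto nhdsWithin_le_nhds)
  have hinj : Set.InjOn c (Finset.range R) :=
    hc.injOn.mono fun _ hi => Finset.mem_range.mp hi
  obtain ⟨m, hm, hD⟩ := exists_pos_eventually_lt_wenoD hinj hl hab hκ hlim
  obtain ⟨K, hK, hI⟩ := (isBigO_wenoI_of_clean hnode (by omega) hil).exists_pos
  obtain ⟨h₀, hh₀, hsmall⟩ := mem_nhdsGT_iff_exists_Ioo_subset.mp (hI.bound.and hD)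
  refine ⟨(K ^ s + 1) / m ^ s, by positivity, h₀, hh₀, fun ε hε h hh hlt =>
    ⟨wenoOmegaG_nonneg hε.le, ?_⟩⟩
  obtain ⟨hIh, hDh⟩ := hsmall ⟨hh, hlt⟩
  rw [Real.norm_of_nonneg (wenoI_nonneg i h), Real.norm_of_nonneg (sq_nonneg h)] at hIh
  exact wenoOmegaG_le_mul hε hi hm hK.le hDh.le hIh

/-- **The global weight is small at a jump.** In the jump setting, if `κ ≠ 0` and at least one
substencil is clean, then `0 ≤ ω_{R,h} ≤ C (h^{2s} + ε)` for small `h` and `0 < ε ≤ 1`. -/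
theorem stmt_10 (R : ℕ) (hR : 3 ≤ R) (c : ℕ → ℝ)
    (hc : ∀ i j : ℕ, i < j → j < R → c i < c j)
    (z : ℝ) (fL fR f : ℝ → ℝ) (U : Set ℝ) (hU : U ∈ nhds z)
    (hfL : ContDiffOn ℝ (⊤ : ℕ∞) fL U) (hfR : ContDiffOn ℝ (⊤ : ℕ∞) fR U)
    (hjump : fL z ≠ fR z)
    (hf : ∀ x : ℝ, f x = if x < z then fL x else fR x)
    (l : ℕ) (hl : l + 1 < R) (hcl : c l < 0) (hcl' : 0 ≤ c (l + 1))
    (hκ : ∑ i ∈ Finset.Ico (l + 1) R,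
        1 / ∏ j ∈ (Finset.range R).erase i, (c i - c j) ≠ 0)
    (hclean : ∃ i ≤ R / 2, ¬(i ≤ l ∧ l ≤ i + (R - 1) / 2 - 1))
    (s : ℕ) (hs : 1 ≤ s) :
    ∃ C > (0 : ℝ), ∃ h₀ > (0 : ℝ), ∀ ε : ℝ, 0 < ε → ε ≤ 1 → ∀ h : ℝ, 0 < h → h < h₀ →
      0 ≤ wenoOmegaG R c z f s ε h ∧
        wenoOmegaG R c z f s ε h ≤ C * (h ^ (2 * s) + ε) := by
  have hdL : DifferentiableAt ℝ fL z := (hfL.contDiffAt hU).differentiableAt (by simp)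
  have hdR : DifferentiableAt ℝ fR z := (hfR.contDiffAt hU).differentiableAt (by simp)
  have hfL_eq : Set.EqOn f fL (Set.Iio z) := fun x hx => (hf x).trans (if_pos hx)
  have hfR_eq : Set.EqOn f fR (Set.Ici z) := fun x hx => (hf x).trans (if_neg (not_lt.mpr hx))
  have hclean' : ∃ i ≤ R / 2, l ∉ Finset.Ico i (i + (R - 1) / 2) :=
    hclean.imp fun i ⟨hi, hil⟩ => ⟨hi, by rw [Finset.mem_Ico]; omega⟩
  obtain ⟨C, hC, h₀, hh₀, hω⟩ := stmt_10_general (fun i _ j hj hij => hc i j hij hj)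
    (isBigO_sub_of_eqOn hdL.differentiableWithinAt hfL_eq)
    (isBigO_sub_of_eqOn hdR.differentiableWithinAt hfR_eq) hjump hl hcl hcl' hκ hclean' s
  exact ⟨C, hC, h₀, hh₀, fun ε hε _ => hω ε hε⟩
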